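/- For every involution θ in the Weyl group W(Bₙ), the lengths of θ and of −θ are complementary: ℓ(−θ) = n(n+1)/2 − ℓ(θ), where ℓ(θ) := (1/2)|{α ∈ Δ⁺ : θα ∉ Δ⁺}| + (1/2) dim ker(θ + id). Equivalently, |{α ∈ Δ⁺ : θα ∈ Δ⁺}| + dim ker(θ − id) = 2·ℓ(−θ). -/

import Mathlib

open scoped RealInnerProductSpace

noncomputable section

/-- Euclidean space `ℝⁿ`. -/
abbrev EucB (n : ℕ) := EuclideanSpace ℝ (Fin n)

/-- The `i`-th standard basis vector of `ℝⁿ`. -/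
def eB (n : ℕ) (i : Fin n) : EucB n := EuclideanSpace.single i (1 : ℝ)

/-- The root system `Δ` of type `Bₙ`:
`{±eᵢ ± eⱼ : i < j} ∪ {±eᵢ}`. -/
def DeltaB (n : ℕ) : Set (EucB n) :=
  {v | (∃ i j : Fin n, i < j ∧
          (v = eB n i + eB n j ∨ v = eB n i - eB n j ∨
           v = -eB n i + eB n j ∨ v = -eB n i - eB n j)) ∨
        ∃ i : Fin n, v = eB n i ∨ v = -eB n i}

/-- The positive system `Δ⁺ = {eᵢ ± eⱼ : i < j} ∪ {eᵢ}`. -/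
def DeltaBpos (n : ℕ) : Set (EucB n) :=
  {v | (∃ i j : Fin n, i < j ∧ (v = eB n i + eB n j ∨ v = eB n i - eB n j)) ∨
        ∃ i : Fin n, v = eB n i}

/-- The coroot `α∨ = 2α/⟪α,α⟫`. -/
def corootB (n : ℕ) (α : EucB n) : EucB n := (2 / ⟪α, α⟫) • α

/-- The linear functional `x ↦ ⟪x, α∨⟫`. -/
def corootForm (n : ℕ) (α : EucB n) : Module.Dual ℝ (EucB n) where
  toFun x := ⟪x, corootB n α⟫
  map_add' x y := inner_add_left _ _ _
  map_smul' c x := by simpa using real_inner_smul_left x (corootB n α) c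

/-- The reflection `s_α(x) = x − ⟪x, α∨⟫ α` as a linear automorphism of `ℝⁿ`
(for `α` a root, the branch condition `⟪α, α∨⟫ = 2` holds). -/
def sReflB (n : ℕ) (α : EucB n) : EucB n ≃ₗ[ℝ] EucB n :=
  if h : corootForm n α α = 2 then Module.reflection h else LinearEquiv.refl ℝ (EucB n)

/-- The Weyl group `W(Bₙ)`, the subgroup of linear automorphisms of `ℝⁿ` generated by the
reflections in the roots of `Δ`. -/
def WeylB (n : ℕ) : Subgroup (EucB n ≃ₗ[ℝ] EucB n) :=
  Subgroup.closure {g | ∃ α ∈ DeltaB n, g = sReflB n α}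


/-- The length of an involution `θ ∈ W(Bₙ)`:
`ℓ(θ) = (1/2)|{α ∈ Δ⁺ : θα ∉ Δ⁺}| + (1/2) dim ker(θ + id)`, as a rational number. -/
def lenB (n : ℕ) (θ : EucB n ≃ₗ[ℝ] EucB n) : ℚ :=
  (Nat.card {α : EucB n // α ∈ DeltaBpos n ∧ θ α ∉ DeltaBpos n} : ℚ) / 2 +
    (Module.finrank ℝ ↥(LinearMap.ker (θ.toLinearMap + LinearMap.id)) : ℚ) / 2

/-- The negative `−θ` of a linear automorphism, as a linear automorphism. -/
def negB (n : ℕ) (θ : EucB n ≃ₗ[ℝ] EucB n) : EucB n ≃ₗ[ℝ] EucB n :=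
  (LinearEquiv.neg ℝ) * θ

theorem eB_app (n : ℕ) (i t : Fin n) : eB n i t = if t = i then (1 : ℝ) else 0 := by
  simp [eB, Pi.single_apply]

/-- An explicit enumeration of the positive roots. -/
def posEnum (n : ℕ) (p : Fin n × Fin n) : EucB n :=
  if p.1 < p.2 then eB n p.1 + eB n p.2
  else if p.2 < p.1 then eB n p.2 - eB n p.1 else eB n p.1

theorem posEnum_app (n : ℕ) (i j t : Fin n) : posEnum n (i, j) t =
    if i < j then (if t = i then (1 : ℝ) else 0) + (if t = j then (1 : ℝ) else 0)
    else if j < i then (if t = j then (1 : ℝ) else 0) - (if t = i then (1 : ℝ) else 0)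
    else if t = i then (1 : ℝ) else 0 := by
  unfold posEnum
  split_ifs <;> simp_all [eB_app]

theorem posEnum_inj (n : ℕ) : Function.Injective (posEnum n) := by
  rintro ⟨i, j⟩ ⟨k, l⟩ h
  have key : ∀ t, posEnum n (i, j) t = posEnum n (k, l) t := fun t => by rw [h]
  simp only [posEnum_app] at key
  have h1 := key i
  have h2 := key j
  have h3 := key k
  have h4 := key l
  clear key h
  rw [Prod.mk.injEq]
  rcases lt_trichotomy i j with a | a | a <;> rcases lt_trichotomy k l with b | b | b <;>
    grind

theorem posEnum_range (n : ℕ) : Set.range (posEnum n) = DeltaBpos n := by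
  ext v
  constructor
  · rintro ⟨⟨i, j⟩, rfl⟩
    unfold posEnum
    dsimp only
    split_ifs with h1 h2
    · exact Or.inl ⟨i, j, h1, Or.inl rfl⟩
    · exact Or.inl ⟨j, i, h2, Or.inr rfl⟩
    · exact Or.inr ⟨i, rfl⟩
  · rintro (⟨i, j, h, rfl | rfl⟩ | ⟨i, rfl⟩)
    · exact ⟨(i, j), by simp [posEnum, h]⟩
    · exact ⟨(j, i), by simp [posEnum, h, h.le]⟩
    · exact ⟨(i, i), by simp [posEnum]⟩

theorem card_pos (n : ℕ) : (DeltaBpos n).ncard = n * n := by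
  rw [← posEnum_range, ← Set.image_univ, Set.ncard_image_of_injective _ (posEnum_inj n)]
  simp [Set.ncard_univ]

theorem finite_pos (n : ℕ) : (DeltaBpos n).Finite := by
  rw [← posEnum_range]; exact Set.finite_range _

/-- A functional positive on the positive roots. -/
def rhoB (n : ℕ) (v : EucB n) : ℝ := ∑ i : Fin n, ((n : ℝ) - (i : ℕ)) * v i

theorem rhoB_add (n : ℕ) (v w : EucB n) : rhoB n (v + w) = rhoB n v + rhoB n w := by
  simp [rhoB, mul_add, Finset.sum_add_distrib]

theorem rhoB_neg (n : ℕ) (v : EucB n) : rhoB n (-v) = - rhoB n v := by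
  simp [rhoB]

theorem rhoB_e (n : ℕ) (i : Fin n) : rhoB n (eB n i) = (n : ℝ) - (i : ℕ) := by
  simp [rhoB, eB_app]

theorem rhoB_pos (n : ℕ) (v : EucB n) (h : v ∈ DeltaBpos n) : 0 < rhoB n v := by
  have hi : ∀ i : Fin n, ((i : ℕ) : ℝ) < n := fun i => by exact_mod_cast i.2
  rcases h with ⟨i, j, h, rfl | rfl⟩ | ⟨i, rfl⟩
  · rw [rhoB_add, rhoB_e, rhoB_e]; linarith [hi i, hi j]
  · rw [sub_eq_add_neg, rhoB_add, rhoB_neg, rhoB_e, rhoB_e]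
    have : ((i : ℕ) : ℝ) < (j : ℕ) := by exact_mod_cast h
    linarith
  · rw [rhoB_e]; linarith [hi i]

theorem negB_mem_iff (n : ℕ) (v : EucB n) (hv : v ∈ DeltaB n) :
    -v ∉ DeltaBpos n ↔ v ∈ DeltaBpos n := by
  constructor
  · intro h
    by_contra h'
    rcases hv with ⟨i, j, hij, rfl | rfl | rfl | rfl⟩ | ⟨i, rfl | rfl⟩
    · exact h' (Or.inl ⟨i, j, hij, Or.inl rfl⟩)
    · exact h' (Or.inl ⟨i, j, hij, Or.inr rfl⟩)
    · exact h (Or.inl ⟨i, j, hij, Or.inr (by abel)⟩)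
    · exact h (Or.inl ⟨i, j, hij, Or.inl (by abel)⟩)
    · exact h' (Or.inr ⟨i, rfl⟩)
    · exact h (Or.inr ⟨i, by abel⟩)
  · intro h h'
    have := rhoB_pos n _ h
    have := rhoB_pos n _ h'
    rw [rhoB_neg] at this
    linarith

/-- Signed permutation property. -/
def IsSP (n : ℕ) (g : EucB n ≃ₗ[ℝ] EucB n) : Prop :=
  ∀ k, ∃ j, g (eB n k) = eB n j ∨ g (eB n k) = - eB n j

theorem IsSP.mul {n : ℕ} {g h : EucB n ≃ₗ[ℝ] EucB n} (hg : IsSP n g) (hh : IsSP n h) :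
    IsSP n (g * h) := by
  intro k
  obtain ⟨j, hj⟩ := hh k
  obtain ⟨l, hl⟩ := hg j
  refine ⟨l, ?_⟩
  rw [LinearEquiv.mul_apply]
  rcases hj with hj | hj <;> rcases hl with hl | hl <;> simp [hj, hl]

theorem sRefl_apply (n : ℕ) (α x : EucB n) (h : corootForm n α α = 2) :
    sReflB n α x = x - ⟪x, corootB n α⟫ • α := by
  rw [sReflB, dif_pos h, Module.reflection_apply]
  rfl

theorem inner_eB (n : ℕ) (i j : Fin n) : ⟪eB n i, eB n j⟫ = if i = j then (1 : ℝ) else 0 := by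
  simp [eB, EuclideanSpace.inner_single_left, Pi.single_apply]

theorem sRefl_inv (n : ℕ) (α : EucB n) : (sReflB n α)⁻¹ = sReflB n α := by
  rw [inv_eq_iff_mul_eq_one]
  unfold sReflB
  split_ifs with h
  · ext1 x
    rw [LinearEquiv.mul_apply, Module.involutive_reflection h x]; rfl
  · rfl

theorem sRefl_SP (n : ℕ) (α : EucB n) (hα : α ∈ DeltaB n) : IsSP n (sReflB n α) := by
  intro k
  by_cases h : corootForm n α α = 2
  swap
  · exact ⟨k, by simp [sReflB, h]⟩
  rw [sRefl_apply n α _ h]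
  have key : ⟪eB n k, corootB n α⟫ = 2 / ⟪α, α⟫ * ⟪eB n k, α⟫ := by
    rw [corootB, real_inner_smul_right]
  rw [key]
  clear key h
  rcases hα with ⟨i, j, hij, hv⟩ | ⟨i, hv⟩
  · have hne := hij.ne
    have hne' := hij.ne'
    by_cases hki : k = i
    · subst hki
      refine ⟨j, ?_⟩
      rcases hv with rfl | rfl | rfl | rfl <;>
      simp only [inner_add_left, inner_add_right, inner_sub_left, inner_sub_right, inner_neg_left,
          inner_neg_right, inner_eB, hne, hne', if_true, if_false] <;>
      norm_num <;> first | (left; module) | (right; module)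
    · by_cases hkj : k = j
      · subst hkj
        refine ⟨i, ?_⟩
        rcases hv with rfl | rfl | rfl | rfl <;>
        simp only [inner_add_left, inner_add_right, inner_sub_left, inner_sub_right, inner_neg_left,
          inner_neg_right, inner_eB, hne, hne', if_true, if_false] <;>
        norm_num <;> first | (left; module) | (right; module)
      · refine ⟨k, ?_⟩
        rcases hv with rfl | rfl | rfl | rfl <;>
        simp [inner_add_left, inner_add_right, inner_sub_left, inner_sub_right, inner_eB, hki, hkj]
  · refine ⟨k, ?_⟩
    by_cases hki : k = i
    · subst hki
      right
      rcases hv with rfl | rfl <;> simp only [inner_eB, inner_neg_left, inner_neg_right, if_true] <;> module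
    · left
      rcases hv with rfl | rfl <;> simp [inner_eB, hki]

theorem weyl_SP (n : ℕ) (g : EucB n ≃ₗ[ℝ] EucB n) (hg : g ∈ WeylB n) :
    IsSP n g ∧ IsSP n g⁻¹ := by
  induction hg using Subgroup.closure_induction with
  | mem x hx =>
    obtain ⟨α, hα, rfl⟩ := hx
    rw [sRefl_inv]
    exact ⟨sRefl_SP n α hα, sRefl_SP n α hα⟩
  | one =>
    rw [inv_one]
    exact ⟨fun k => ⟨k, Or.inl rfl⟩, fun k => ⟨k, Or.inl rfl⟩⟩
  | mul x y _ _ hx hy =>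
    rw [mul_inv_rev]
    exact ⟨hx.1.mul hy.1, hy.2.mul hx.2⟩
  | inv x _ hx =>
    rw [inv_inv]
    exact ⟨hx.2, hx.1⟩

theorem pm_mem (n : ℕ) (a b : Fin n) (hab : a ≠ b) :
    eB n a + eB n b ∈ DeltaB n ∧ eB n a - eB n b ∈ DeltaB n ∧
    -eB n a + eB n b ∈ DeltaB n ∧ -eB n a - eB n b ∈ DeltaB n := by
  rcases lt_or_gt_of_ne hab with h | h
  · exact ⟨Or.inl ⟨a, b, h, by simp⟩, Or.inl ⟨a, b, h, by simp⟩,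
      Or.inl ⟨a, b, h, by simp⟩, Or.inl ⟨a, b, h, by simp⟩⟩
  · exact ⟨Or.inl ⟨b, a, h, Or.inl (by abel)⟩, Or.inl ⟨b, a, h, Or.inr (Or.inr (Or.inl (by abel)))⟩,
      Or.inl ⟨b, a, h, Or.inr (Or.inl (by abel))⟩,
      Or.inl ⟨b, a, h, Or.inr (Or.inr (Or.inr (by abel)))⟩⟩

theorem eB_inj (n : ℕ) (a b : Fin n) (h : eB n a = eB n b) : a = b := by
  have : eB n a a = eB n b a := by rw [h]
  by_contra hab
  simp [eB_app, hab] at this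

theorem eB_ne_neg (n : ℕ) (a b : Fin n) (h : eB n a = - eB n b) : False := by
  have h2 : eB n a a = - eB n b a := by rw [h]; rfl
  simp only [eB_app] at h2
  split_ifs at h2 <;> norm_num at h2 <;> simp_all

theorem SP_map (n : ℕ) (g : EucB n ≃ₗ[ℝ] EucB n) (hg : IsSP n g) (v : EucB n)
    (hv : v ∈ DeltaBpos n) : g v ∈ DeltaB n := by
  rcases hv with ⟨i, j, hij, hv⟩ | ⟨i, rfl⟩
  · obtain ⟨a, ha⟩ := hg i
    obtain ⟨b, hb⟩ := hg j
    have hab : a ≠ b := by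
      rintro rfl
      rcases ha with ha | ha <;> rcases hb with hb | hb
      · exact hij.ne (eB_inj n _ _ (g.injective (ha.trans hb.symm)))
      · exact eB_ne_neg n i j (g.injective (by rw [map_neg, ha, hb, neg_neg]))
      · exact eB_ne_neg n i j (g.injective (by rw [map_neg, ha, hb]))
      · exact hij.ne (eB_inj n _ _ (g.injective (ha.trans hb.symm)))
    obtain ⟨h1, h2, h3, h4⟩ := pm_mem n a b hab
    rcases hv with rfl | rfl <;> rcases ha with ha | ha <;> rcases hb with hb | hb <;>
      simp only [map_add, map_sub, ha, hb, sub_neg_eq_add, ← sub_eq_add_neg] <;> assumption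
  · obtain ⟨a, ha⟩ := hg i
    exact Or.inr ⟨a, ha⟩

theorem finrank_sum (n : ℕ) (θ : EucB n ≃ₗ[ℝ] EucB n) (h2 : θ * θ = 1) :
    Module.finrank ℝ ↥(LinearMap.ker (θ.toLinearMap + LinearMap.id)) +
    Module.finrank ℝ ↥(LinearMap.ker (θ.toLinearMap - LinearMap.id)) = n := by
  have hθ : ∀ x, θ (θ x) = x := fun x => by rw [← LinearEquiv.mul_apply, h2]; rfl
  have : LinearMap.ker (θ.toLinearMap + LinearMap.id) =
      LinearMap.range (θ.toLinearMap - LinearMap.id) := by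
    ext x
    simp only [LinearMap.mem_ker, LinearMap.mem_range, LinearMap.add_apply, LinearMap.sub_apply,
      LinearMap.id_apply, LinearEquiv.coe_coe]
    constructor
    · intro h
      refine ⟨(-(1/2) : ℝ) • x, ?_⟩
      rw [map_smul, eq_neg_of_add_eq_zero_left h]
      module
    · rintro ⟨y, rfl⟩
      rw [map_sub, hθ]; abel
  rw [this, LinearMap.finrank_range_add_finrank_ker]
  simp

/-- For every involution `θ ∈ W(Bₙ)`, the lengths of `θ` and `−θ` are complementary:
`ℓ(−θ) = n(n+1)/2 − ℓ(θ)`.  Equivalently,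
`|{α ∈ Δ⁺ : θα ∈ Δ⁺}| + dim ker(θ − id) = 2·ℓ(−θ)`. -/
theorem length_duality (n : ℕ) (hn : 0 < n)
    (θ : EucB n ≃ₗ[ℝ] EucB n) (hθW : θ ∈ WeylB n) (hθ2 : θ * θ = 1) :
    lenB n (negB n θ) = (n * (n + 1) : ℚ) / 2 - lenB n θ ∧
    ((Nat.card {α : EucB n // α ∈ DeltaBpos n ∧ θ α ∈ DeltaBpos n} +
        Module.finrank ℝ ↥(LinearMap.ker (θ.toLinearMap - LinearMap.id)) : ℚ) =
      2 * lenB n (negB n θ)) := by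
  have hSP := (weyl_SP n θ hθW).1
  have hneg : ∀ x, negB n θ x = - θ x := fun x => rfl
  have hset : {α : EucB n | α ∈ DeltaBpos n ∧ negB n θ α ∉ DeltaBpos n} =
      {α | α ∈ DeltaBpos n ∧ θ α ∈ DeltaBpos n} := by
    ext α
    simp only [Set.mem_ofPred_eq, hneg]
    exact and_congr_right fun h => negB_mem_iff n _ (SP_map n θ hSP α h)
  have hc1 : Nat.card {α : EucB n // α ∈ DeltaBpos n ∧ negB n θ α ∉ DeltaBpos n} =
      Nat.card {α : EucB n // α ∈ DeltaBpos n ∧ θ α ∈ DeltaBpos n} :=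
    congrArg Set.ncard hset
  have hc2 : Nat.card {α : EucB n // α ∈ DeltaBpos n ∧ θ α ∈ DeltaBpos n} +
      Nat.card {α : EucB n // α ∈ DeltaBpos n ∧ θ α ∉ DeltaBpos n} = n * n := by
    rw [← card_pos n]
    exact Set.ncard_inter_add_ncard_sdiff_eq_ncard (DeltaBpos n) (θ ⁻¹' DeltaBpos n)
      (finite_pos n)
  have hk : LinearMap.ker ((negB n θ).toLinearMap + LinearMap.id) =
      LinearMap.ker (θ.toLinearMap - LinearMap.id) := by
    ext x
    simp only [LinearMap.mem_ker, LinearMap.add_apply, LinearMap.sub_apply,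
      LinearMap.id_apply, LinearEquiv.coe_coe, hneg]
    rw [neg_add_eq_zero, sub_eq_zero]
  have hf := finrank_sum n θ hθ2
  have hcq := congrArg (Nat.cast (R := ℚ)) hc2
  have hfq := congrArg (Nat.cast (R := ℚ)) hf
  push_cast at hcq hfq
  unfold lenB
  rw [hc1, hk]
  constructor
  · linarith
  · ring
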